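/- Let R be a commutative ring, let A be a unital R-algebra, let H and G be groups, and let φ : H → G be an injective group homomorphism. For g ∈ G let β^G_g denote the R-algebra automorphism of the PiTensorProduct algebra ⨂[R] (x : G), A given by reindexing along x ↦ g x, and define β^H_h on ⨂[R] (x : H), A analogously. Then there exists an R-algebra homomorphism Ψ : (⨂[R] (x : H), A) → (⨂[R] (x : G), A) such that on pure tensors Ψ(⊗_{x∈H} z_x) = ⊗_{y∈G} w_y, where w_{φ(x)} = z_x for x ∈ H and w_y = 1 for y outside the range of φ, and such that Ψ ∘ β^H_h = β^G_{φ(h)} ∘ Ψ for every h ∈ H. -/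

import Mathlib

open scoped TensorProduct

/-!
Padding a family by ones along an injection `f : ι → κ` depends multilinearly on the family, because
modifying one coordinate of the family modifies one coordinate of its extension. It also preserves
the pointwise `1` and products, so it induces an algebra homomorphism of tensor powers. Padding
commutes with bijections of the index types that are compatible with `f`; for a group homomorphism
`φ`, the left translations by `h` and `φ h` are compatible since `φ (h * x) = φ h * φ x`.
-/

section Extend

open Function

variable {ι ι' κ κ' M : Type*}

theorem extend_update [DecidableEq ι] [DecidableEq κ] {f : ι → κ} (hf : Injective f)
    (z : ι → M) (e : κ → M) (i : ι) (a : M) :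
    extend f (update z i a) e = update (extend f z e) (f i) a := by
  refine eq_update_iff.2 ⟨by rw [hf.extend_apply, update_self], fun k hk => ?_⟩
  by_cases hmem : ∃ j, f j = k
  · obtain ⟨j, rfl⟩ := hmem
    rw [hf.extend_apply, hf.extend_apply, update_of_ne (ne_of_apply_ne f hk)]
  · rw [extend_apply' _ _ _ hmem, extend_apply' _ _ _ hmem]

theorem extend_comp_equiv_symm {f : ι → κ} {f' : ι' → κ'} (hf' : Injective f')
    (σ : ι ≃ ι') (τ : κ ≃ κ') (hfστ : f' ∘ σ = τ ∘ f) (z : ι → M) (e : κ → M) :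
    extend f' (z ∘ σ.symm) (e ∘ τ.symm) = extend f z e ∘ τ.symm := by
  have hf : Injective f := .of_comp (hfστ ▸ hf'.comp σ.injective)
  calc extend f' (z ∘ σ.symm) (e ∘ τ.symm)
      = extend f' (extend σ z ((e ∘ τ.symm) ∘ f')) (e ∘ τ.symm) := by
        congr 1
        exact funext fun i => (σ.extend_apply _ _ i).symm
    _ = extend (τ ∘ f) z (e ∘ τ.symm) := by rw [← σ.injective.extend_comp hf', hfστ]
    _ = extend τ (extend f z ((e ∘ τ.symm) ∘ τ)) (e ∘ τ.symm) := hf.extend_comp τ.injective _ _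
    _ = extend f z e ∘ τ.symm := by
        rw [comp_assoc, τ.symm_comp_self, comp_id]
        exact funext (τ.extend_apply _ _)

end Extend

section Multilinear

variable {R ι κ M N : Type*} [Semiring R] [AddCommMonoid M] [AddCommMonoid N]
  [Module R M] [Module R N]

/-- The multilinear map obtained from a multilinear map `g` indexed by `κ` by placing the arguments
along an injection `f : ι → κ` and freezing the remaining arguments of `g` to the values of `e`. -/
@[simps]
noncomputable def multilinearCompExtend (g : MultilinearMap R (fun _ : κ => M) N) {f : ι → κ}
    (hf : Function.Injective f) (e : κ → M) : MultilinearMap R (fun _ : ι => M) N where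
  toFun z := g (Function.extend f z e)
  map_update_add' z i a b := by
    classical simp only [extend_update hf, g.map_update_add]
  map_update_smul' z i c a := by
    classical simp only [extend_update hf, g.map_update_smul]

end Multilinear

section TensorPower

open PiTensorProduct

theorem reindex_tprod_eq_comp {R M ι ι' : Type*} [CommSemiring R] [AddCommMonoid M] [Module R M]
    (σ : ι ≃ ι') (z : ι → M) :
    reindex R (fun _ => M) σ (tprod R z) = tprod R (z ∘ σ.symm) :=
  reindex_tprod (s := fun _ => M) σ z

variable (R A : Type*) {ι ι' κ κ' : Type*} [CommSemiring R] [Semiring A] [Algebra R A]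

/-- The homomorphism of tensor powers of an algebra induced by an injection `f` of index types:
it puts the `i`-th factor in position `f i` and `1` in the positions outside the range of `f`. -/
noncomputable def extendByOneAlgHom {f : ι → κ} (hf : Function.Injective f) :
    (⨂[R] (_ : ι), A) →ₐ[R] (⨂[R] (_ : κ), A) :=
  liftAlgHom (multilinearCompExtend (tprod R) hf 1)
    (by rw [multilinearCompExtend_apply, Function.extend_one, one_def])
    (fun z w => by
      simp only [multilinearCompExtend_apply, tprod_mul_tprod]
      rw [← Function.extend_mul, one_mul])

variable {A}

theorem extendByOneAlgHom_tprod {f : ι → κ} (hf : Function.Injective f) (z : ι → A) :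
    extendByOneAlgHom R A hf (tprod R z) = tprod R (Function.extend f z 1) :=
  lift.tprod z

variable {R}

theorem extendByOneAlgHom_reindex {f : ι → κ} {f' : ι' → κ'} (hf : Function.Injective f)
    (hf' : Function.Injective f') (σ : ι ≃ ι') (τ : κ ≃ κ') (hfστ : f' ∘ σ = τ ∘ f)
    (x : ⨂[R] (_ : ι), A) :
    extendByOneAlgHom R A hf' (reindex R (fun _ => A) σ x) =
      reindex R (fun _ => A) τ (extendByOneAlgHom R A hf x) := by
  suffices (extendByOneAlgHom R A hf').toLinearMap ∘ₗ (reindex R (fun _ => A) σ).toLinearMap =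
      (reindex R (fun _ => A) τ).toLinearMap ∘ₗ (extendByOneAlgHom R A hf).toLinearMap from
    LinearMap.congr_fun this x
  refine PiTensorProduct.ext (MultilinearMap.ext fun z => ?_)
  calc extendByOneAlgHom R A hf' (reindex R (fun _ => A) σ (tprod R z))
      = extendByOneAlgHom R A hf' (tprod R (z ∘ σ.symm)) :=
        congrArg _ (reindex_tprod_eq_comp σ z)
    _ = tprod R (Function.extend f' (z ∘ σ.symm) ((1 : κ → A) ∘ τ.symm)) :=
        extendByOneAlgHom_tprod R hf' _
    _ = tprod R (Function.extend f z 1 ∘ τ.symm) := by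
        rw [extend_comp_equiv_symm hf' σ τ hfστ]
    _ = reindex R (fun _ => A) τ (tprod R (Function.extend f z 1)) :=
        (reindex_tprod_eq_comp τ _).symm
    _ = reindex R (fun _ => A) τ (extendByOneAlgHom R A hf (tprod R z)) := by
        rw [extendByOneAlgHom_tprod]

end TensorPower

theorem exists_equivariant_tensor_extension_general {R A ι κ : Type*} [CommSemiring R]
    [Semiring A] [Algebra R A] {f : ι → κ} (hf : Function.Injective f) :
    ∃ Ψ : (⨂[R] (_ : ι), A) →ₐ[R] (⨂[R] (_ : κ), A),
      (∀ z : ι → A,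
        Ψ (PiTensorProduct.tprod R z) = PiTensorProduct.tprod R (Function.extend f z fun _ => 1)) ∧
      ∀ (σ : Equiv.Perm ι) (τ : Equiv.Perm κ), Function.Semiconj f σ τ → ∀ x,
        Ψ (PiTensorProduct.reindex R (fun _ => A) σ x) =
          PiTensorProduct.reindex R (fun _ => A) τ (Ψ x) :=
  ⟨extendByOneAlgHom R A hf, extendByOneAlgHom_tprod R hf,
    fun σ τ hfστ => extendByOneAlgHom_reindex hf hf σ τ hfστ.comp_eq⟩

/-- For an injective group homomorphism `φ : H → G` and a unital `R`-algebra `A`, there is an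
`R`-algebra homomorphism `Ψ : ⨂[R] (x : H), A → ⨂[R] (x : G), A` which on pure tensors places
`z_x` in the `φ x`-th factor and `1` in the factors outside the range of `φ`, and which
intertwines the Bernoulli shifts: `Ψ ∘ β^H_h = β^G_{φ h} ∘ Ψ` for every `h : H`. -/
theorem exists_equivariant_tensor_extension {R : Type*} [CommRing R]
    {A : Type*} [Ring A] [Algebra R A] {H G : Type*} [Group H] [Group G]
    (φ : H →* G) (hφ : Function.Injective φ) :
    ∃ Ψ : (⨂[R] (_ : H), A) →ₐ[R] (⨂[R] (_ : G), A),
      (∀ z : H → A,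
        Ψ (PiTensorProduct.tprod R z) =
          PiTensorProduct.tprod R (Function.extend φ z fun _ => (1 : A))) ∧
      (∀ (h : H) (x : ⨂[R] (_ : H), A),
        Ψ ((PiTensorProduct.reindex R (fun _ : H => A) (Equiv.mulLeft h)) x) =
          (PiTensorProduct.reindex R (fun _ : G => A) (Equiv.mulLeft (φ h))) (Ψ x)) := by
  obtain ⟨Ψ, hΨ, hΨ_reindex⟩ := exists_equivariant_tensor_extension_general (R := R) (A := A) hφ
  exact ⟨Ψ, hΨ, fun h => hΨ_reindex _ _ (map_mul φ h)⟩
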